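/- Let n ≥ 1, Z ⊆ ℤⁿ nonempty, H_Z a complex Hilbert space with orthonormal basis {e_m : m ∈ Z}, {ξ_m : m ∈ Z} a family of unit vectors in ℓ²(ℕ), and M the U_Z-covariant POVM on (𝕋ⁿ, ℬ(𝕋ⁿ)) acting on H_Z determined by ⟨e_k, M(B) e_l⟩ = ⟨ξ_k, ξ_l⟩ ∫_B ⟨z, k − l⟩ dμ_n(z). Let 𝐇 ⊆ ℓ²(ℕ) be the closed linear span of {ξ_m : m ∈ Z}. Then M is an extreme point of the convex set of all U_Z-covariant POVMs on (𝕋ⁿ, ℬ(𝕋ⁿ)) acting on H_Z if and only if the only bounded operator A on 𝐇 satisfying ⟨ξ_m, A ξ_m⟩ = 0 for all m ∈ Z is A = 0. -/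

import Mathlib

open MeasureTheory Set

local notation "⟪" x ", " y "⟫" => @inner ℂ _ _ x y

noncomputable instance : MeasurableSpace Circle := borel Circle
instance : BorelSpace Circle := ⟨rfl⟩

/-- A normalized positive operator valued measure (POVM). -/
structure POVM (Ω : Type*) [MeasurableSpace Ω] (H : Type*) [NormedAddCommGroup H]
    [InnerProductSpace ℂ H] [CompleteSpace H] where
  toFun : Set Ω → (H →L[ℂ] H)
  isPositive : ∀ B : Set Ω, MeasurableSet B → (toFun B).IsPositive
  normalized : toFun Set.univ = 1
  m_iUnion : ∀ B : ℕ → Set Ω, (∀ k, MeasurableSet (B k)) →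
    Pairwise (Function.onFun Disjoint B) → ∀ φ ψ : H,
      HasSum (fun k => ⟪φ, toFun (B k) ψ⟫) ⟪φ, toFun (⋃ k, B k) ψ⟫

/-- `ℓ²(ℕ)`. -/
noncomputable abbrev ell2 : Type := lp (fun _ : ℕ => ℂ) 2

/-- The character `⟨w, m⟩ = w₁^{m₁} ⋯ w_n^{m_n}` of the torus `𝕋ⁿ`. -/
noncomputable def torusChar {n : ℕ} (w : Fin n → Circle) (m : Fin n → ℤ) : ℂ :=
  ∏ i, (w i : ℂ) ^ (m i)

/-- Covariance of a POVM `M` on `𝕋ⁿ` acting on `H`: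
`U_Z(w) M(B) U_Z(w)* = M(w·B)` for all `w ∈ 𝕋ⁿ`. -/
def TorusCovariant {n : ℕ} {H : Type*} [NormedAddCommGroup H] [InnerProductSpace ℂ H]
    [CompleteSpace H] (U : (Fin n → Circle) → (H ≃ₗᵢ[ℂ] H))
    (M : POVM (Fin n → Circle) H) : Prop :=
  ∀ w : Fin n → Circle, ∀ B : Set (Fin n → Circle), MeasurableSet B →
    ∀ φ ψ : H,
      ⟪(U w φ : H), M.toFun ((fun z => w * z) '' B) (U w ψ)⟫ = ⟪φ, M.toFun B ψ⟫


/-- `M` is an extreme point of the convex set of `U`-covariant POVMs on `𝕋ⁿ`. -/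
def IsExtremeTorusCovariant {n : ℕ} {H : Type*} [NormedAddCommGroup H]
    [InnerProductSpace ℂ H] [CompleteSpace H]
    (U : (Fin n → Circle) → (H ≃ₗᵢ[ℂ] H)) (M : POVM (Fin n → Circle) H) : Prop :=
  ∀ M₁ M₂ : POVM (Fin n → Circle) H,
    TorusCovariant U M₁ → TorusCovariant U M₂ →
    ∀ t : ℝ, 0 < t → t < 1 →
    (∀ B : Set (Fin n → Circle), MeasurableSet B →
      M.toFun B = (t : ℂ) • M₁.toFun B + ((1 - t : ℝ) : ℂ) • M₂.toFun B) →
    ∀ B : Set (Fin n → Circle), MeasurableSet B →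
      M₁.toFun B = M.toFun B ∧ M₂.toFun B = M.toFun B

section Chars
variable {n : ℕ}

lemma torusChar_mul (w z : Fin n → Circle) (m : Fin n → ℤ) :
    torusChar (w * z) m = torusChar w m * torusChar z m := by
  simp [torusChar, mul_zpow, Finset.prod_mul_distrib]

lemma norm_torusChar (w : Fin n → Circle) (m : Fin n → ℤ) : ‖torusChar w m‖ = 1 := by
  unfold torusChar
  rw [norm_prod]
  refine Finset.prod_eq_one fun i _ => ?_
  rw [norm_zpow, Circle.norm_coe, one_zpow]

lemma torusChar_ne (w : Fin n → Circle) (m : Fin n → ℤ) : torusChar w m ≠ 0 := by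
  intro h; have := norm_torusChar w m; simp [h] at this

lemma torusChar_sub (w : Fin n → Circle) (k l : Fin n → ℤ) :
    torusChar w (k - l) = torusChar w k * (starRingEnd ℂ) (torusChar w l) := by
  have h : (starRingEnd ℂ) (torusChar w l) = (torusChar w l)⁻¹ := by
    rw [Complex.inv_def, Complex.normSq_eq_norm_sq, norm_torusChar]; simp
  rw [h]
  simp [torusChar, zpow_sub₀, Finset.prod_div_distrib, div_eq_mul_inv, Finset.prod_mul_distrib]

lemma torusChar_conj_mul (w : Fin n → Circle) (m : Fin n → ℤ) :
    (starRingEnd ℂ) (torusChar w m) * torusChar w m = 1 := by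
  rw [mul_comm, Complex.mul_conj, Complex.normSq_eq_norm_sq, norm_torusChar]; simp

lemma torusChar_neg (w : Fin n → Circle) (l : Fin n → ℤ) :
    torusChar w (-l) = (starRingEnd ℂ) (torusChar w l) := by
  have := torusChar_sub w 0 l
  simpa [torusChar] using this

lemma torusChar_zero (w : Fin n → Circle) : torusChar w 0 = 1 := by simp [torusChar]

lemma torusChar_one (m : Fin n → ℤ) : torusChar (1 : Fin n → Circle) m = 1 := by
  simp [torusChar]

lemma continuous_torusChar (m : Fin n → ℤ) :
    Continuous (fun z : Fin n → Circle => torusChar z m) := by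
  unfold torusChar
  refine continuous_finsetProd _ fun i _ => ?_
  exact (continuous_subtype_val.comp (continuous_apply i)).zpow₀ _ (fun a => Or.inl (Circle.coe_ne_zero (a i)))

lemma exists_torusChar_ne_one {m : Fin n → ℤ} (hm : m ≠ 0) :
    ∃ w : Fin n → Circle, torusChar w m ≠ 1 := by
  obtain ⟨i, hi⟩ := Function.ne_iff.1 hm
  refine ⟨Pi.mulSingle i (Circle.exp (Real.pi / m i)), ?_⟩
  have hi' : (m i : ℂ) ≠ 0 := by exact_mod_cast hi
  have : torusChar (Pi.mulSingle i (Circle.exp (Real.pi / m i))) m = -1 := by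
    unfold torusChar
    rw [Finset.prod_eq_single i]
    · simp only [Pi.mulSingle_eq_same, Circle.coe_exp]
      rw [← Complex.exp_int_mul, ← Complex.exp_pi_mul_I]
      congr 1
      push_cast
      field_simp
    · intro j _ hj
      simp [Pi.mulSingle_eq_of_ne hj]
    · simp
  rw [this]
  norm_num

variable (μ : Measure (Fin n → Circle)) [μ.IsHaarMeasure] [IsProbabilityMeasure μ]

lemma integrable_torusChar (ν : Measure (Fin n → Circle)) [IsFiniteMeasure ν] (m : Fin n → ℤ) :
    Integrable (fun z => torusChar z m) ν := by
  refine Integrable.of_bound (continuous_torusChar m).aestronglyMeasurable 1 ?_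
  exact Filter.Eventually.of_forall fun z => (norm_torusChar z m).le

lemma setIntegral_smul_torusChar (w : Fin n → Circle) (B : Set (Fin n → Circle))
    (hB : MeasurableSet B) (m : Fin n → ℤ) :
    ∫ z in (fun z => w * z) '' B, torusChar z m ∂μ = torusChar w m * ∫ z in B, torusChar z m ∂μ := by
  have h1 : MeasurePreserving (fun z => w * z) μ μ := measurePreserving_mul_left μ w
  have h2 : MeasurableEmbedding (fun z : Fin n → Circle => w * z) := measurableEmbedding_mulLeft w
  rw [h1.setIntegral_image_emb h2, ← integral_const_mul]
  simp only [torusChar_mul]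

lemma integral_torusChar {m : Fin n → ℤ} (hm : m ≠ 0) : ∫ z, torusChar z m ∂μ = 0 := by
  obtain ⟨w, hw⟩ := exists_torusChar_ne_one hm
  have := setIntegral_smul_torusChar μ w univ MeasurableSet.univ m
  have hs : (fun z => w * z) '' (univ : Set (Fin n → Circle)) = univ := by
    rw [image_univ]; exact (Group.mulLeft_bijective w).surjective.range_eq
  rw [hs, Measure.restrict_univ] at this
  by_contra h
  exact hw (mul_right_cancel₀ h (by rw [← this, one_mul]))

lemma exists_setIntegral_torusChar_ne (m : Fin n → ℤ) :
    ∃ B, MeasurableSet B ∧ ∫ z in B, torusChar z m ∂μ ≠ 0 := by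
  by_contra! h
  have := ae_eq_zero_of_forall_setIntegral_eq_of_sigmaFinite (μ := μ)
    (f := fun z => torusChar z m) (fun s _ _ => (integrable_torusChar μ m).integrableOn)
    (fun s hs _ => h s hs)
  obtain ⟨z, hz⟩ := this.exists
  exact torusChar_ne z m hz

end Chars

section Ext
variable {ι H : Type*} [NormedAddCommGroup H] [InnerProductSpace ℂ H]

lemma basis_ext_op (b : HilbertBasis ι ℂ H) (S T : H →L[ℂ] H)
    (h : ∀ k l, ⟪b k, S (b l)⟫ = ⟪b k, T (b l)⟫) : S = T := by
  refine ContinuousLinearMap.ext_on (s := range b) ?_ ?_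
  · have := b.dense_span
    rw [Submodule.dense_iff_topologicalClosure_eq_top]; exact this
  · rintro _ ⟨l, rfl⟩
    apply b.repr.injective
    ext k
    rw [b.repr_apply_apply, b.repr_apply_apply, h]

end Ext

section Kolm

lemma exists_op_of_core {V E : Type*} [AddCommGroup V] [Module ℂ V] [NormedAddCommGroup E]
    [InnerProductSpace ℂ E] [CompleteSpace E] (c : PreInnerProductSpace.Core ℂ V)
    (e : V →ₗ[ℂ] E) (he : DenseRange e) (C : ℝ) (hC : 0 ≤ C)
    (h : ∀ x, (c.inner x x).re ≤ C * ‖e x‖ ^ 2) :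
    ∃ A : E →L[ℂ] E, ∀ x y, ⟪e x, A (e y)⟫ = c.inner x y := by
  letI : SeminormedAddCommGroup V := @InnerProductSpace.Core.toSeminormedAddCommGroup ℂ V _ _ _ c
  letI : InnerProductSpace ℂ V := InnerProductSpace.ofCore c
  let f : V →ₗ[ℂ] UniformSpace.Completion V :=
    (UniformSpace.Completion.toComplL (𝕜 := ℂ) (E := V)).toLinearMap
  have hf : ∀ x y, ⟪f x, f y⟫ = c.inner x y := fun x y => UniformSpace.Completion.inner_coe x y
  have hb : ∃ D, ∀ x, ‖f x‖ ≤ D * ‖e x‖ := by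
    refine ⟨√C, fun x => ?_⟩
    have h1 : ‖f x‖ ^ 2 = (c.inner x x).re := by
      rw [← hf]; exact norm_sq_eq_re_inner (𝕜 := ℂ) (f x)
    refine le_of_sq_le_sq ?_ (by positivity)
    rw [h1, mul_pow, Real.sq_sqrt hC]
    exact h x
  let S := f.extendOfNorm e
  refine ⟨ContinuousLinearMap.adjoint S ∘L S, fun x y => ?_⟩
  rw [ContinuousLinearMap.comp_apply, ContinuousLinearMap.adjoint_inner_right,
    LinearMap.extendOfNorm_eq he hb, LinearMap.extendOfNorm_eq he hb, hf]

end Kolm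
section Construct
variable {n : ℕ} {Z : Set (Fin n → ℤ)} {H : Type*} [NormedAddCommGroup H]
  [InnerProductSpace ℂ H] [CompleteSpace H]

lemma exists_povm (b : HilbertBasis Z ℂ H)
    (μ : Measure (Fin n → Circle)) [μ.IsHaarMeasure] [IsProbabilityMeasure μ]
    (U : (Fin n → Circle) → (H ≃ₗᵢ[ℂ] H))
    (hU : ∀ w : Fin n → Circle, ∀ m : Z, U w (b m) = torusChar w (m : Fin n → ℤ) • b m)
    (ξ : Z → ell2) (hξ : ∀ m : Z, ‖ξ m‖ = 1) :
    ∃ M : POVM (Fin n → Circle) H, TorusCovariant U M ∧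
      ∀ k l : Z, ∀ B : Set (Fin n → Circle), MeasurableSet B →
      ⟪b k, M.toFun B (b l)⟫
        = ⟪ξ k, ξ l⟫ * ∫ z in B, torusChar z ((k : Fin n → ℤ) - l) ∂μ := by
  let v' : Z → (Fin n → Circle) → ell2 := fun m z => (starRingEnd ℂ) (torusChar z m) • ξ m
  have hv' : ∀ m, MemLp (v' m) 2 μ := by
    intro m
    refine MemLp.of_bound ?_ 1 ?_
    · exact Continuous.aestronglyMeasurable
        ((Complex.continuous_conj.comp (continuous_torusChar m.1)).smul continuous_const)
    · refine Filter.Eventually.of_forall fun z => ?_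
      simp only [v', norm_smul, RCLike.norm_conj, norm_torusChar, hξ]; simp
  let v : Z → Lp ell2 2 μ := fun m => (hv' m).toLp
  have hvin : ∀ k l (B : Set (Fin n → Circle)), ∫ z in B, ⟪v k z, v l z⟫ ∂μ
      = ⟪ξ k, ξ l⟫ * ∫ z in B, torusChar z ((k : Fin n → ℤ) - l) ∂μ := by
    intro k l B
    rw [← integral_const_mul]
    apply integral_congr_ae
    have h1 := ae_restrict_of_ae (s := B) (hv' k).coeFn_toLp
    have h2 := ae_restrict_of_ae (s := B) (hv' l).coeFn_toLp
    filter_upwards [h1, h2] with z h1 h2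
    simp only [v]
    rw [h1, h2]
    simp only [v', inner_smul_left, inner_smul_right, torusChar_sub, RingHomCompTriple.comp_apply,
      RingHom.id_apply, Complex.conj_conj]
    ring
  have hv : Orthonormal ℂ v := by
    classical
    rw [orthonormal_iff_ite]
    intro k l
    rw [L2.inner_def, ← setIntegral_univ, hvin, setIntegral_univ]
    split_ifs with h
    · subst h
      simp [torusChar_zero, inner_self_eq_norm_sq_to_K, hξ]
    · rw [integral_torusChar μ, mul_zero]
      intro h'
      exact h (Subtype.ext (sub_eq_zero.1 h'))
  have hOF := hv.orthogonalFamily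
  let J : H →ₗᵢ[ℂ] Lp ell2 2 μ :=
    hOF.linearIsometry.comp b.repr.toLinearIsometry
  have hJ : ∀ m, J (b m) = v m := by
    classical
    intro m
    change hOF.linearIsometry (b.repr (b m)) = v m
    rw [HilbertBasis.repr_self, OrthogonalFamily.linearIsometry_apply_single]
    simp
  let R : (B : Set (Fin n → Circle)) → H →L[ℂ] Lp ell2 2 (μ.restrict B) := fun B =>
    (LpToLpRestrictCLM (Fin n → Circle) ell2 ℂ μ 2 B) ∘L J.toContinuousLinearMap
  let T : Set (Fin n → Circle) → H →L[ℂ] H := fun B => ContinuousLinearMap.adjoint (R B) ∘L R B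
  have hT : ∀ B φ ψ, ⟪φ, T B ψ⟫ = ∫ z in B, ⟪J φ z, J ψ z⟫ ∂μ := by
    intro B φ ψ
    simp only [T]
    rw [ContinuousLinearMap.comp_apply, ContinuousLinearMap.adjoint_inner_right, L2.inner_def]
    apply integral_congr_ae
    have h1 := LpToLpRestrictCLM_coeFn ℂ B (J φ)
    have h2 := LpToLpRestrictCLM_coeFn ℂ B (J ψ)
    filter_upwards [h1, h2] with z h1 h2
    simp only [R, ContinuousLinearMap.comp_apply, LinearIsometry.coe_toContinuousLinearMap]
    rw [h1, h2]
  have hform : ∀ k l : Z, ∀ B : Set (Fin n → Circle), ⟪b k, T B (b l)⟫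
        = ⟪ξ k, ξ l⟫ * ∫ z in B, torusChar z ((k : Fin n → ℤ) - l) ∂μ := by
    intro k l B
    rw [hT, hJ, hJ, hvin]
  refine ⟨⟨T, ?_, ?_, ?_⟩, ?_, fun k l B _ => hform k l B⟩
  · intro B _
    exact ContinuousLinearMap.isPositive_adjoint_comp_self (R B)
  · ext ψ
    refine ext_inner_left ℂ fun φ => ?_
    rw [hT, setIntegral_univ, ← L2.inner_def, J.inner_map_map]
    simp
  · intro B hB hd φ ψ
    simp only [hT]
    exact hasSum_integral_iUnion hB hd (L2.integrable_inner (J φ) (J ψ)).integrableOn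
  · intro w B hB φ ψ
    have key : (ContinuousLinearMap.adjoint ((U w).toContinuousLinearEquiv : H →L[ℂ] H)) ∘L
        (T ((fun z => w * z) '' B)) ∘L ((U w).toContinuousLinearEquiv : H →L[ℂ] H) = T B := by
      refine basis_ext_op b _ _ fun k l => ?_
      simp only [ContinuousLinearMap.comp_apply, ContinuousLinearMap.adjoint_inner_right]
      simp only [ContinuousLinearEquiv.coe_coe, LinearIsometryEquiv.coe_toContinuousLinearEquiv, hU]
      rw [map_smul, inner_smul_left, inner_smul_right, hform, hform,
        setIntegral_smul_torusChar μ w B hB, torusChar_sub w]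
      have h1 := torusChar_conj_mul w (k : Fin n → ℤ)
      have h2 := torusChar_conj_mul w (l : Fin n → ℤ)
      linear_combination (⟪ξ k, ξ l⟫ * ∫ z in B, torusChar z ((k : Fin n → ℤ) - l) ∂μ) *
        (h1 * ((starRingEnd ℂ) (torusChar w l.1) * torusChar w l.1)  + h2)
    have := congrArg (fun S : H →L[ℂ] H => ⟪φ, S ψ⟫) key
    simp only [ContinuousLinearMap.comp_apply, ContinuousLinearMap.adjoint_inner_right] at this
    exact this

end Construct
section Structure

lemma povm_measure {Ω H : Type*} [MeasurableSpace Ω] [NormedAddCommGroup H]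
    [InnerProductSpace ℂ H] [CompleteSpace H] (M : POVM Ω H) (φ : H) :
    ∃ ν : Measure Ω, IsFiniteMeasure ν ∧
      ∀ B, MeasurableSet B → ⟪M.toFun B φ, φ⟫ = (ν.real B : ℂ) := by
  have hre : ∀ B, MeasurableSet B → ⟪M.toFun B φ, φ⟫ = ((⟪φ, M.toFun B φ⟫.re : ℝ) : ℂ) ∧
      0 ≤ (⟪φ, M.toFun B φ⟫).re := by
    intro B hB
    have h1 := ((M.isPositive B hB).inner_nonneg_right φ)
    have h2 := ((M.isPositive B hB).inner_nonneg_left φ)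
    rw [Complex.le_def] at h1 h2
    refine ⟨?_, h1.1⟩
    have : ⟪φ, M.toFun B φ⟫.re = ⟪M.toFun B φ, φ⟫.re := inner_re_symm (𝕜 := ℂ) _ _
    apply Complex.ext
    · simp [this]
    · simpa using h2.2.symm
  let m : ∀ B : Set Ω, MeasurableSet B → ENNReal :=
    fun B _ => ENNReal.ofReal (⟪φ, M.toFun B φ⟫.re)
  have h0 : m ∅ MeasurableSet.empty = 0 := by
    have h := (M.m_iUnion (fun _ => ∅) (fun _ => MeasurableSet.empty)
      (fun i j _ => by simp [Function.onFun]) φ φ).summable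
    have h' := (summable_const_iff _).1 h
    simp only [m, h']
    simp
  have hU : ∀ ⦃f : ℕ → Set Ω⦄ (h : ∀ i, MeasurableSet (f i)), Pairwise (Function.onFun Disjoint f) →
      m (⋃ i, f i) (MeasurableSet.iUnion h) = ∑' i, m (f i) (h i) := by
    intro f hf hd
    have h := M.m_iUnion f hf hd φ φ
    have h' := Complex.hasSum_re h
    simp only [m]
    rw [← ENNReal.ofReal_tsum_of_nonneg (fun i => (hre _ (hf i)).2) h'.summable, h'.tsum_eq]
  refine ⟨Measure.ofMeasurable m h0 hU, ⟨?_⟩, ?_⟩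
  · rw [Measure.ofMeasurable_apply _ MeasurableSet.univ]
    exact ENNReal.ofReal_lt_top
  · intro B hB
    rw [Measure.real, Measure.ofMeasurable_apply _ hB, ENNReal.toReal_ofReal (hre B hB).2]
    exact (hre B hB).1

variable {n : ℕ}

lemma average_measure (μ ν : Measure (Fin n → Circle)) [μ.IsHaarMeasure] [IsProbabilityMeasure μ]
    [IsFiniteMeasure ν] (m : Fin n → ℤ) :
    ∃ c : ℂ, ∀ B, MeasurableSet B →
      Integrable (fun w => torusChar w m * (ν.real ((fun z => w⁻¹ * z) '' B) : ℂ)) μ ∧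
      ∫ w, torusChar w m * (ν.real ((fun z => w⁻¹ * z) '' B) : ℂ) ∂μ
        = c * ∫ z in B, torusChar z m ∂μ := by
  refine ⟨∫ z, (starRingEnd ℂ) (torusChar z m) ∂ν, fun B hB => ?_⟩
  let F : (Fin n → Circle) → (Fin n → Circle) → ℂ :=
    fun w z => torusChar w m * (B.indicator (fun _ => (1 : ℂ)) (w * z))
  have hFm : Measurable (Function.uncurry F) := by
    have h1 : Measurable (fun z : Fin n → Circle => torusChar z m) :=
      (continuous_torusChar m).measurable
    have h2 : Measurable (B.indicator (fun _ => (1 : ℂ))) := measurable_const.indicator hB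
    exact (h1.comp measurable_fst).mul (h2.comp (measurable_fst.mul measurable_snd))
  have hF : Integrable (Function.uncurry F) (μ.prod ν) := by
    refine Integrable.of_bound hFm.aestronglyMeasurable 1 ?_
    refine Filter.Eventually.of_forall fun p => ?_
    simp only [Function.uncurry, F, norm_mul, norm_torusChar, one_mul]
    refine (norm_indicator_le_norm_self _ _).trans ?_
    simp
  have hFz : ∀ w, ∫ z, F w z ∂ν = torusChar w m * (ν.real ((fun z => w⁻¹ * z) '' B) : ℂ) := by
    intro w
    simp only [F]
    rw [integral_const_mul]
    congr 1
    have hs : (fun z => w⁻¹ * z) '' B = (fun z => w * z) ⁻¹' B := by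
      simp
    rw [hs]
    have hB' : MeasurableSet ((fun z => w * z) ⁻¹' B) := measurable_const_mul w hB
    have := integral_indicator_const (μ := ν) (1 : ℂ) hB'
    rw [Complex.real_smul, mul_one] at this
    rw [← this]
    rfl
  constructor
  · have := hF.integral_prod_left
    simpa only [Function.uncurry, hFz] using this
  · simp only [← hFz]
    rw [integral_integral_swap hF, ← integral_mul_const]
    congr 1
    ext z
    rw [← integral_const_mul, ← integral_indicator hB]
    refine Eq.trans ?_ (integral_mul_right_eq_self (μ := μ) _ z)
    congr 1
    ext w
    simp only [F]
    by_cases hw : w * z ∈ B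
    · simp only [indicator_of_mem hw]
      rw [torusChar_mul]
      linear_combination -torusChar w m * torusChar_conj_mul z m
    · simp only [indicator_of_notMem hw, mul_zero]

variable {Z : Set (Fin n → ℤ)} {H : Type*} [NormedAddCommGroup H]
  [InnerProductSpace ℂ H] [CompleteSpace H]

lemma covariant_form (b : HilbertBasis Z ℂ H)
    (μ : Measure (Fin n → Circle)) [μ.IsHaarMeasure] [IsProbabilityMeasure μ]
    (U : (Fin n → Circle) → (H ≃ₗᵢ[ℂ] H))
    (hU : ∀ w : Fin n → Circle, ∀ m : Z, U w (b m) = torusChar w (m : Fin n → ℤ) • b m)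
    (M : POVM (Fin n → Circle) H) (hM : TorusCovariant U M) (k l : Z) :
    ∃ c : ℂ, ∀ B, MeasurableSet B →
      ⟪b k, M.toFun B (b l)⟫ = c * ∫ z in B, torusChar z ((k : Fin n → ℤ) - (l : Fin n → ℤ)) ∂μ := by
  have hcov : ∀ w B, MeasurableSet B → ⟪b k, M.toFun B (b l)⟫ =
      torusChar w ((k : Fin n → ℤ) - (l : Fin n → ℤ)) * ⟪b k, M.toFun ((fun z => w⁻¹ * z) '' B) (b l)⟫ := by
    intro w B hB
    have hB' : MeasurableSet ((fun z => w⁻¹ * z) '' B) :=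
      (measurableEmbedding_mulLeft w⁻¹).measurableSet_image.2 hB
    have h := hM w _ hB' (b k) (b l)
    have hs : (fun z => w * z) '' ((fun z => w⁻¹ * z) '' B) = B := by
      rw [← image_comp]
      simp [Function.comp_def]
    rw [hs, hU, hU, map_smul, inner_smul_left, inner_smul_right] at h
    rw [← h, torusChar_sub]
    have h1 := torusChar_conj_mul w (k : Fin n → ℤ)
    have h2 := torusChar_conj_mul w (l : Fin n → ℤ)
    linear_combination -⟪b k, M.toFun B (b l)⟫ *
        (h1 * ((starRingEnd ℂ) (torusChar w l.1) * torusChar w l.1)  + h2)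
  have hpol : ∀ B, MeasurableSet B → ⟪b k, M.toFun B (b l)⟫ =
      (⟪M.toFun B (b l + b k), b l + b k⟫ - ⟪M.toFun B (b l - b k), b l - b k⟫ +
      Complex.I * ⟪M.toFun B (b l + Complex.I • b k), b l + Complex.I • b k⟫ -
      Complex.I * ⟪M.toFun B (b l - Complex.I • b k), b l - Complex.I • b k⟫) / 4 := by
    intro B hB
    have h1 := inner_map_polarization (M.toFun B : H →ₗ[ℂ] H) (b l) (b k)
    have h2 := ((M.isPositive B hB).isSymmetric (b k) (b l))
    exact h2.symm.trans h1
  obtain ⟨ν₁, _, h₁⟩ := povm_measure M (b l + b k)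
  obtain ⟨ν₂, _, h₂⟩ := povm_measure M (b l - b k)
  obtain ⟨ν₃, _, h₃⟩ := povm_measure M (b l + Complex.I • b k)
  obtain ⟨ν₄, _, h₄⟩ := povm_measure M (b l - Complex.I • b k)
  obtain ⟨c₁, k₁⟩ := average_measure μ ν₁ ((k : Fin n → ℤ) - (l : Fin n → ℤ))
  obtain ⟨c₂, k₂⟩ := average_measure μ ν₂ ((k : Fin n → ℤ) - (l : Fin n → ℤ))
  obtain ⟨c₃, k₃⟩ := average_measure μ ν₃ ((k : Fin n → ℤ) - (l : Fin n → ℤ))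
  obtain ⟨c₄, k₄⟩ := average_measure μ ν₄ ((k : Fin n → ℤ) - (l : Fin n → ℤ))
  refine ⟨(c₁ - c₂ + Complex.I * c₃ - Complex.I * c₄) / 4, fun B hB => ?_⟩
  have hB' : ∀ w : Fin n → Circle, MeasurableSet ((fun z => w⁻¹ * z) '' B) := fun w =>
      (measurableEmbedding_mulLeft w⁻¹).measurableSet_image.2 hB
  have e1 : ⟪b k, M.toFun B (b l)⟫ = ∫ w, torusChar w ((k : Fin n → ℤ) - (l : Fin n → ℤ)) *
      ⟪b k, M.toFun ((fun z => w⁻¹ * z) '' B) (b l)⟫ ∂μ := by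
    simp only [← hcov _ B hB]
    simp
  rw [e1]
  have e2 : ∀ w, torusChar w ((k : Fin n → ℤ) - (l : Fin n → ℤ)) *
      ⟪b k, M.toFun ((fun z => w⁻¹ * z) '' B) (b l)⟫ =
      (torusChar w ((k : Fin n → ℤ) - (l : Fin n → ℤ)) * (ν₁.real ((fun z => w⁻¹ * z) '' B) : ℂ)
      - torusChar w ((k : Fin n → ℤ) - (l : Fin n → ℤ)) * (ν₂.real ((fun z => w⁻¹ * z) '' B) : ℂ)
      + Complex.I * (torusChar w ((k : Fin n → ℤ) - (l : Fin n → ℤ)) * (ν₃.real ((fun z => w⁻¹ * z) '' B) : ℂ))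
      - Complex.I * (torusChar w ((k : Fin n → ℤ) - (l : Fin n → ℤ)) * (ν₄.real ((fun z => w⁻¹ * z) '' B) : ℂ)))
        / 4 := by
    intro w
    rw [hpol _ (hB' w), h₁ _ (hB' w), h₂ _ (hB' w), h₃ _ (hB' w), h₄ _ (hB' w)]
    ring
  simp only [e2]
  have i1 := (k₁ B hB).1
  have i2 := (k₂ B hB).1
  have i3 := (k₃ B hB).1.const_mul Complex.I
  have i4 := (k₄ B hB).1.const_mul Complex.I
  rw [integral_div, integral_sub, integral_add, integral_sub i1 i2, integral_const_mul,
    integral_const_mul, (k₁ B hB).2, (k₂ B hB).2, (k₃ B hB).2, (k₄ B hB).2]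
  · ring
  · exact i1.sub i2
  · exact i3
  · exact (i1.sub i2).add i3
  · exact i4

end Structure
section Kernel
variable {n : ℕ} {Z : Set (Fin n → ℤ)} {H : Type*} [NormedAddCommGroup H]
  [InnerProductSpace ℂ H] [CompleteSpace H]

lemma kernel_herm (b : HilbertBasis Z ℂ H)
    (μ : Measure (Fin n → Circle)) [μ.IsHaarMeasure] [IsProbabilityMeasure μ]
    (M : POVM (Fin n → Circle) H) (c : Z → Z → ℂ)
    (hc : ∀ k l : Z, ∀ B, MeasurableSet B →
      ⟪b k, M.toFun B (b l)⟫ = c k l * ∫ z in B, torusChar z ((k : Fin n → ℤ) - l) ∂μ)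
    (k l : Z) : (starRingEnd ℂ) (c k l) = c l k := by
  obtain ⟨B, hB, hne⟩ := exists_setIntegral_torusChar_ne μ ((l : Fin n → ℤ) - k)
  have h1 := congrArg (starRingEnd ℂ) (hc k l B hB)
  rw [inner_conj_symm, map_mul, ← integral_conj] at h1
  have h3 : ⟪M.toFun B (b l), b k⟫ = ⟪b l, M.toFun B (b k)⟫ :=
    (M.isPositive B hB).isSymmetric (b l) (b k)
  rw [h3, hc l k B hB] at h1
  have h2 : ∀ z : Fin n → Circle, (starRingEnd ℂ) (torusChar z ((k : Fin n → ℤ) - l))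
      = torusChar z ((l : Fin n → ℤ) - k) := by
    intro z; rw [← torusChar_neg, neg_sub]
  simp only [h2] at h1
  exact (mul_right_cancel₀ hne h1).symm

lemma kernel_diag (b : HilbertBasis Z ℂ H)
    (μ : Measure (Fin n → Circle)) [μ.IsHaarMeasure] [IsProbabilityMeasure μ]
    (M : POVM (Fin n → Circle) H) (c : Z → Z → ℂ)
    (hc : ∀ k l : Z, ∀ B, MeasurableSet B →
      ⟪b k, M.toFun B (b l)⟫ = c k l * ∫ z in B, torusChar z ((k : Fin n → ℤ) - l) ∂μ)
    (k : Z) : c k k = 1 := by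
  have h := hc k k univ MeasurableSet.univ
  rw [M.normalized, setIntegral_univ] at h
  have hb : ‖b k‖ = 1 := b.orthonormal.1 k
  simpa [torusChar_zero, inner_self_eq_norm_sq_to_K, hb] using h.symm

lemma kernel_pos (b : HilbertBasis Z ℂ H)
    (μ : Measure (Fin n → Circle)) [μ.IsHaarMeasure] [IsProbabilityMeasure μ]
    (M : POVM (Fin n → Circle) H) (c : Z → Z → ℂ)
    (hc : ∀ k l : Z, ∀ B, MeasurableSet B →
      ⟪b k, M.toFun B (b l)⟫ = c k l * ∫ z in B, torusChar z ((k : Fin n → ℤ) - l) ∂μ)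
    (a : Z →₀ ℂ) : 0 ≤ (a.sum fun k x => a.sum fun l y => (starRingEnd ℂ) x * y * c k l).re := by
  let h : (Fin n → Circle) → ℂ := fun z => ∑ k ∈ a.support, ∑ l ∈ a.support,
    (starRingEnd ℂ) (a k) * a l * c k l * torusChar z ((k : Fin n → ℤ) - l)
  have hcont : Continuous h := by
    refine continuous_finsetSum _ fun k _ => continuous_finsetSum _ fun l _ => ?_
    exact continuous_const.mul (continuous_torusChar _)
  have hint : Integrable h μ := by
    refine integrable_finsetSum _ fun k _ => integrable_finsetSum _ fun l _ => ?_
    exact (integrable_torusChar μ _).const_mul _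
  have hB : ∀ B, MeasurableSet B → ∫ z in B, h z ∂μ =
      ⟪∑ k ∈ a.support, a k • b k, M.toFun B (∑ l ∈ a.support, a l • b l)⟫ := by
    intro B hB
    simp only [h]
    rw [integral_finsetSum, map_sum, sum_inner]
    · refine Finset.sum_congr rfl fun k _ => ?_
      rw [integral_finsetSum, inner_sum]
      · refine Finset.sum_congr rfl fun l _ => ?_
        rw [integral_const_mul, map_smul, inner_smul_left, inner_smul_right, hc k l B hB]
        ring
      · intro l _
        exact (integrable_torusChar _ _).const_mul _
    · intro k _
      exact integrable_finsetSum _ fun l _ => (integrable_torusChar _ _).const_mul _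
  have hae : 0 ≤ᵐ[μ] fun z => (h z).re := by
    refine ae_nonneg_of_forall_setIntegral_nonneg hint.re fun B hB' _ => ?_
    have h1 : ∫ z in B, (h z).re ∂μ = (∫ z in B, h z ∂μ).re :=
      integral_re (𝕜 := ℂ) hint.integrableOn
    rw [h1, hB B hB']
    exact (M.isPositive B hB').re_inner_nonneg_right _
  have hd := Measure.dense_of_ae hae
  have hcl : IsClosed {z | (0 : ℝ) ≤ (h z).re} :=
    isClosed_le continuous_const (Complex.continuous_re.comp hcont)
  have hall : {z | (0 : ℝ) ≤ (h z).re} = univ := by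
    rw [← hcl.closure_eq]; exact hd.closure_eq
  have h1 : (1 : Fin n → Circle) ∈ {z | (0 : ℝ) ≤ (h z).re} := by rw [hall]; trivial
  rw [mem_setOf_eq] at h1
  simpa only [h, torusChar_one, mul_one, Finsupp.sum] using h1

end Kernel

section Suff

/-- Kernel form as a pre-inner product. -/
noncomputable def kernelCore {ι : Type*} (c : ι → ι → ℂ)
    (hh : ∀ k l, (starRingEnd ℂ) (c k l) = c l k)
    (hp : ∀ a : ι →₀ ℂ,
      0 ≤ (a.sum fun k x => a.sum fun l y => (starRingEnd ℂ) x * y * c k l).re) :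
    PreInnerProductSpace.Core ℂ (ι →₀ ℂ) where
  inner a d := a.sum fun k x => d.sum fun l y => (starRingEnd ℂ) x * y * c k l
  conj_inner_symm a d := by
    simp only [Finsupp.sum, map_sum, map_mul, Complex.conj_conj, hh]
    rw [Finset.sum_comm]
    refine Finset.sum_congr rfl fun k _ => Finset.sum_congr rfl fun l _ => ?_
    ring
  re_inner_nonneg a := hp a
  add_left x y z := by
    rw [Finsupp.sum_add_index']
    · intro k; simp
    · intro k u v
      rw [← Finsupp.sum_add]
      simp [add_mul]
  smul_left x y r := by
    rw [Finsupp.sum_smul_index', Finsupp.mul_sum]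
    · congr 1
      ext k u
      rw [Finsupp.mul_sum]
      congr 1
      ext l v
      simp
      ring
    · intro k; simp

lemma kernel_eq {ι : Type*} (ξ : ι → ell2) (c : ι → ι → ℂ) (C : ℝ) (hC : 0 ≤ C)
    (hξ : ∀ m, ‖ξ m‖ = 1)
    (hh : ∀ k l, (starRingEnd ℂ) (c k l) = c l k)
    (hp : ∀ a : ι →₀ ℂ,
      0 ≤ (a.sum fun k x => a.sum fun l y => (starRingEnd ℂ) x * y * c k l).re)
    (hle : ∀ a : ι →₀ ℂ,
      (a.sum fun k x => a.sum fun l y => (starRingEnd ℂ) x * y * c k l).re ≤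
        C * (a.sum fun k x => a.sum fun l y => (starRingEnd ℂ) x * y * ⟪ξ k, ξ l⟫).re)
    (hd : ∀ k, c k k = 1)
    (hA : ∀ A : ell2 →L[ℂ] ell2,
        (∀ v : ell2, A v ∈ (Submodule.span ℂ (Set.range ξ)).topologicalClosure) →
        (∀ v ∈ ((Submodule.span ℂ (Set.range ξ)).topologicalClosure)ᗮ, A v = 0) →
        (∀ m, ⟪ξ m, A (ξ m)⟫ = 0) →
        A = 0) (k l : ι) : c k l = ⟪ξ k, ξ l⟫ := by
  set K := (Submodule.span ℂ (Set.range ξ)).topologicalClosure with hK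
  haveI : CompleteSpace K := (Submodule.isClosed_topologicalClosure _).completeSpace_coe
  have hmem : ∀ m, ξ m ∈ K := fun m =>
    Submodule.le_topologicalClosure _ (Submodule.subset_span ⟨m, rfl⟩)
  let ξ' : ι → K := fun m => ⟨ξ m, hmem m⟩
  let e : (ι →₀ ℂ) →ₗ[ℂ] K := Finsupp.linearCombination ℂ ξ'
  have hval : ∀ a, ((e a : K) : ell2) = Finsupp.linearCombination ℂ ξ a := by
    intro a
    simp [e, Finsupp.linearCombination_apply, Finsupp.sum, ξ']
  have he : DenseRange e := by
    intro x
    have hx : (x : ell2) ∈ closure ((Submodule.span ℂ (Set.range ξ)) : Set ell2) := x.2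
    rw [closure_subtype]
    refine closure_mono ?_ hx
    intro y hy
    rw [SetLike.mem_coe, Finsupp.mem_span_range_iff_exists_finsupp] at hy
    obtain ⟨a, rfl⟩ := hy
    refine ⟨e a, ⟨a, rfl⟩, ?_⟩
    rw [hval, Finsupp.linearCombination_apply]
  obtain ⟨A, hAe⟩ := exists_op_of_core (kernelCore c hh hp) e he C hC (by
    intro a
    refine (hle a).trans (le_of_eq ?_)
    congr 1
    have h1 : ‖e a‖ ^ 2 = (⟪((e a : K) : ell2), ((e a : K) : ell2)⟫).re :=
      norm_sq_eq_re_inner (𝕜 := ℂ) ((e a : K) : ell2)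
    rw [h1, hval, Finsupp.linearCombination_apply]
    simp only [Finsupp.sum]
    rw [sum_inner]
    congr 1
    refine Finset.sum_congr rfl fun k _ => ?_
    rw [inner_sum]
    refine Finset.sum_congr rfl fun l _ => ?_
    rw [inner_smul_left, inner_smul_right]
    ring)
  have hes : ∀ m, e (Finsupp.single m 1) = ξ' m := by intro m; simp [e]
  have hkl : ∀ k l, ⟪ξ' k, A (ξ' l)⟫ = c k l := by
    intro k l
    rw [← hes, ← hes, hAe]
    change ((Finsupp.single k (1 : ℂ)).sum fun k x => (Finsupp.single l (1 : ℂ)).sum fun l y =>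
      (starRingEnd ℂ) x * y * c k l) = _
    rw [Finsupp.sum_single_index, Finsupp.sum_single_index] <;> simp
  let A' : ell2 →L[ℂ] ell2 := K.subtypeL ∘L (A - 1) ∘L K.orthogonalProjection
  have hA'ξ : ∀ k l, ⟪ξ k, A' (ξ l)⟫ = c k l - ⟪ξ k, ξ l⟫ := by
    intro k l
    have hpr : K.orthogonalProjection (ξ l) = ξ' l :=
      Submodule.orthogonalProjection_mem_subspace_eq_self (ξ' l)
    simp only [A', ContinuousLinearMap.comp_apply, hpr]
    rw [ContinuousLinearMap.sub_apply, map_sub, inner_sub_right, ← hkl k l]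
    rfl
  have hz := hA A' (fun v => Subtype.mem _) (fun v hv => by
      have : K.orthogonalProjection v = 0 :=
        Submodule.orthogonalProjection_mem_subspace_orthogonalComplement_eq_zero hv
      simp [A', this]) (fun m => by
      rw [hA'ξ, hd]; simp [inner_self_eq_norm_sq_to_K, hξ])
  have := hA'ξ k l
  rw [hz] at this
  simp only [ContinuousLinearMap.zero_apply, inner_zero_right] at this
  exact (sub_eq_zero.1 this.symm)

end Suff
section Nec

lemma pos_of_norm_le {E : Type*} [NormedAddCommGroup E] [InnerProductSpace ℂ E] [CompleteSpace E]
    (S : E →L[ℂ] E) (hS : IsSelfAdjoint S) (hn : ‖S‖ ≤ 1) :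
    ∃ Q : E →L[ℂ] E, ∀ x y, ⟪Q x, Q y⟫ = ⟪x, y⟫ + ⟪x, S y⟫ := by
  have hpos : (1 + S).IsPositive := by
    rw [ContinuousLinearMap.isPositive_def']
    refine ⟨(IsSelfAdjoint.one _).add hS, fun x => ?_⟩
    rw [ContinuousLinearMap.reApplyInnerSelf_apply, ContinuousLinearMap.add_apply, inner_add_left,
      map_add]
    have h1 : RCLike.re ⟪(1 : E →L[ℂ] E) x, x⟫ = ‖x‖ ^ 2 := inner_self_eq_norm_sq (𝕜 := ℂ) x
    have h2 : |RCLike.re ⟪S x, x⟫| ≤ ‖x‖ ^ 2 := by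
      calc |RCLike.re ⟪S x, x⟫| ≤ ‖⟪S x, x⟫‖ := RCLike.abs_re_le_norm _
        _ ≤ ‖S x‖ * ‖x‖ := norm_inner_le_norm _ _
        _ ≤ (1 * ‖x‖) * ‖x‖ := by
          gcongr
          exact S.le_of_opNorm_le hn x
        _ = ‖x‖ ^ 2 := by ring
    rw [h1]
    linarith [neg_abs_le (RCLike.re ⟪S x, x⟫)]
  have h0 : 0 ≤ 1 + S := (ContinuousLinearMap.nonneg_iff_isPositive _).2 hpos
  obtain ⟨Q, hQ⟩ := CStarAlgebra.nonneg_iff_eq_star_mul_self.1 h0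
  refine ⟨Q, fun x y => ?_⟩
  rw [← ContinuousLinearMap.adjoint_inner_right]
  have : (ContinuousLinearMap.adjoint Q) (Q y) = (1 + S) y := by rw [hQ]; rfl
  rw [this, ContinuousLinearMap.add_apply, inner_add_right]
  rfl

variable {n : ℕ} {Z : Set (Fin n → ℤ)} {H : Type*} [NormedAddCommGroup H]
  [InnerProductSpace ℂ H] [CompleteSpace H]

lemma nec_selfadjoint (b : HilbertBasis Z ℂ H)
    (μ : Measure (Fin n → Circle)) [μ.IsHaarMeasure] [IsProbabilityMeasure μ]
    (U : (Fin n → Circle) → (H ≃ₗᵢ[ℂ] H))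
    (hU : ∀ w : Fin n → Circle, ∀ m : Z, U w (b m) = torusChar w (m : Fin n → ℤ) • b m)
    (ξ : Z → ell2) (hξ : ∀ m : Z, ‖ξ m‖ = 1)
    (M : POVM (Fin n → Circle) H)
    (hMform : ∀ k l : Z, ∀ B : Set (Fin n → Circle), MeasurableSet B →
      ⟪b k, M.toFun B (b l)⟫
        = ⟪ξ k, ξ l⟫ * ∫ z in B, torusChar z ((k : Fin n → ℤ) - l) ∂μ)
    (hext : IsExtremeTorusCovariant U M) (S : ell2 →L[ℂ] ell2) (hS : IsSelfAdjoint S)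
    (hn : ‖S‖ ≤ 1) (hd : ∀ m, ⟪ξ m, S (ξ m)⟫ = 0) (k l : Z) : ⟪ξ k, S (ξ l)⟫ = 0 := by
  have unit : ∀ x : ell2, ⟪x, x⟫ = 1 → ‖x‖ = 1 := by
    intro x hx
    have : ‖x‖ ^ 2 = 1 := by
      rw [norm_sq_eq_re_inner (𝕜 := ℂ) x, hx]; simp
    nlinarith [norm_nonneg x]
  obtain ⟨P, hP⟩ := pos_of_norm_le S hS hn
  obtain ⟨Q, hQ⟩ := pos_of_norm_le (-S) hS.neg (by rwa [norm_neg])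
  have hξ' : ∀ m, ⟪ξ m, ξ m⟫ = 1 := fun m => by simp [inner_self_eq_norm_sq_to_K, hξ]
  obtain ⟨M₁, hM₁, f₁⟩ := exists_povm b μ U hU (fun m => P (ξ m))
    (fun m => unit _ (by rw [hP, hd, hξ', add_zero]))
  obtain ⟨M₂, hM₂, f₂⟩ := exists_povm b μ U hU (fun m => Q (ξ m))
    (fun m => unit _ (by
      rw [hQ, ContinuousLinearMap.neg_apply, inner_neg_right, hd, hξ', neg_zero, add_zero]))
  obtain ⟨B, hB, hne⟩ := exists_setIntegral_torusChar_ne μ ((k : Fin n → ℤ) - l)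
  have h := (hext M₁ M₂ hM₁ hM₂ (1 / 2) (by norm_num) (by norm_num) (by
    intro B hB
    refine basis_ext_op b _ _ fun k l => ?_
    rw [ContinuousLinearMap.add_apply, ContinuousLinearMap.smul_apply,
      ContinuousLinearMap.smul_apply, inner_add_right, inner_smul_right, inner_smul_right,
      hMform k l B hB, f₁ k l B hB, f₂ k l B hB, hP, hQ, ContinuousLinearMap.neg_apply,
      inner_neg_right]
    push_cast
    ring) B hB).1
  have h1 := f₁ k l B hB
  rw [h, hMform k l B hB, hP] at h1
  have h2 := mul_right_cancel₀ hne h1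
  linear_combination -h2

lemma nec_selfadjoint' (b : HilbertBasis Z ℂ H)
    (μ : Measure (Fin n → Circle)) [μ.IsHaarMeasure] [IsProbabilityMeasure μ]
    (U : (Fin n → Circle) → (H ≃ₗᵢ[ℂ] H))
    (hU : ∀ w : Fin n → Circle, ∀ m : Z, U w (b m) = torusChar w (m : Fin n → ℤ) • b m)
    (ξ : Z → ell2) (hξ : ∀ m : Z, ‖ξ m‖ = 1)
    (M : POVM (Fin n → Circle) H)
    (hMform : ∀ k l : Z, ∀ B : Set (Fin n → Circle), MeasurableSet B →
      ⟪b k, M.toFun B (b l)⟫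
        = ⟪ξ k, ξ l⟫ * ∫ z in B, torusChar z ((k : Fin n → ℤ) - l) ∂μ)
    (hext : IsExtremeTorusCovariant U M) (S : ell2 →L[ℂ] ell2) (hS : IsSelfAdjoint S)
    (hd : ∀ m, ⟪ξ m, S (ξ m)⟫ = 0) (k l : Z) : ⟪ξ k, S (ξ l)⟫ = 0 := by
  have hpos : 0 < ‖S‖ + 1 := by positivity
  let r : ℝ := (‖S‖ + 1)⁻¹
  have hr : (r : ℂ) ≠ 0 := by
    have : r ≠ 0 := (inv_pos.2 hpos).ne'
    exact_mod_cast this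
  have hsa : IsSelfAdjoint ((r : ℂ) • S) :=
    IsSelfAdjoint.smul (by rw [isSelfAdjoint_iff]; simp) hS
  have h := nec_selfadjoint b μ U hU ξ hξ M hMform hext ((r : ℂ) • S) hsa (by
      rw [norm_smul, Complex.norm_real, Real.norm_of_nonneg (inv_pos.2 hpos).le]
      rw [inv_mul_le_iff₀ hpos]; linarith)
    (fun m => by rw [ContinuousLinearMap.smul_apply, inner_smul_right, hd, mul_zero]) k l
  rw [ContinuousLinearMap.smul_apply, inner_smul_right] at h
  exact (mul_eq_zero.1 h).resolve_left hr

end Nec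

theorem stmt9 (n : ℕ) (hn : 1 ≤ n) (Z : Set (Fin n → ℤ)) (hZ : Z.Nonempty)
    (H : Type*) [NormedAddCommGroup H] [InnerProductSpace ℂ H] [CompleteSpace H]
    (b : HilbertBasis Z ℂ H)
    (μ : Measure (Fin n → Circle)) (hHaar : μ.IsHaarMeasure) (hProb : IsProbabilityMeasure μ)
    (U : (Fin n → Circle) → (H ≃ₗᵢ[ℂ] H))
    (hU : ∀ w : Fin n → Circle, ∀ m : Z, U w (b m) = torusChar w (m : Fin n → ℤ) • b m)
    (ξ : Z → ell2) (hξ : ∀ m : Z, ‖ξ m‖ = 1)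
    (M : POVM (Fin n → Circle) H) (hMcov : TorusCovariant U M)
    (hMform : ∀ k l : Z, ∀ B : Set (Fin n → Circle), MeasurableSet B →
      ⟪b k, M.toFun B (b l)⟫
        = ⟪ξ k, ξ l⟫ * ∫ z in B, torusChar z ((k : Fin n → ℤ) - l) ∂μ) :
    IsExtremeTorusCovariant U M ↔
      -- the only bounded operator `A` on `𝐇` (the closed span of the `ξ_m`, identified with
      -- the operators on `ℓ²(ℕ)` mapping `𝐇` into itself and vanishing on `𝐇ᗮ`)
      -- satisfying `⟨ξ_m, A ξ_m⟩ = 0` for all `m ∈ Z` is `A = 0`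
      ∀ A : ell2 →L[ℂ] ell2,
        (∀ v : ell2, A v ∈ (Submodule.span ℂ (Set.range ξ)).topologicalClosure) →
        (∀ v ∈ ((Submodule.span ℂ (Set.range ξ)).topologicalClosure)ᗮ, A v = 0) →
        (∀ m : Z, ⟪ξ m, A (ξ m)⟫ = 0) →
        A = 0 := by
  haveI := hHaar
  haveI := hProb
  constructor
  · intro hext A hA1 hA2 hA3
    set A' := ContinuousLinearMap.adjoint A with hA'
    have hin : ∀ x y : ell2, ⟪x, A' y⟫ = (starRingEnd ℂ) ⟪y, A x⟫ := by
      intro x y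
      rw [hA', ContinuousLinearMap.adjoint_inner_right, inner_conj_symm]
    have hs1 : IsSelfAdjoint (A + A') := IsSelfAdjoint.add_star_self A
    have hs2 : IsSelfAdjoint (Complex.I • (A - A')) := by
      rw [isSelfAdjoint_iff, star_smul, star_sub]
      have h1 : star A = A' := rfl
      have h2 : star A' = A := by rw [← h1, star_star]
      rw [h1, h2]
      have h3 : star Complex.I = -Complex.I := Complex.conj_I
      rw [h3, neg_smul, ← smul_neg, neg_sub]
    have e1 := nec_selfadjoint' b μ U hU ξ hξ M hMform hext _ hs1 (fun m => by
      rw [ContinuousLinearMap.add_apply, inner_add_right, hin, hA3]; simp)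
    have e2 := nec_selfadjoint' b μ U hU ξ hξ M hMform hext _ hs2 (fun m => by
      rw [ContinuousLinearMap.smul_apply, inner_smul_right, ContinuousLinearMap.sub_apply,
        inner_sub_right, hin, hA3]; simp)
    have e3 : ∀ k l, ⟪ξ k, A (ξ l)⟫ = 0 := by
      intro k l
      have h1 := e1 k l
      have h2 := e2 k l
      rw [ContinuousLinearMap.add_apply, inner_add_right] at h1
      rw [ContinuousLinearMap.smul_apply, inner_smul_right, ContinuousLinearMap.sub_apply,
        inner_sub_right] at h2
      have h3 := (mul_eq_zero.1 h2).resolve_left Complex.I_ne_zero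
      linear_combination (h1 + h3) / 2
    set K := (Submodule.span ℂ (Set.range ξ)).topologicalClosure with hK
    haveI : CompleteSpace K := (Submodule.isClosed_topologicalClosure _).completeSpace_coe
    have horth : ∀ x : ell2, (∀ k, ⟪ξ k, x⟫ = 0) → x ∈ Kᗮ := by
      intro x hx
      rw [hK, Submodule.orthogonal_closure, Submodule.mem_orthogonal]
      intro u hu
      induction hu using Submodule.span_induction with
      | mem u hu => obtain ⟨k, rfl⟩ := hu; exact hx k
      | zero => simp
      | add u v _ _ hu hv => rw [inner_add_left, hu, hv, add_zero]
      | smul c u _ hu => rw [inner_smul_left, hu, mul_zero]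
    have e4 : ∀ l, A (ξ l) = 0 := by
      intro l
      have h1 := horth (A (ξ l)) (fun k => e3 k l)
      have h2 := (Submodule.mem_orthogonal _ _).1 h1 _ (hA1 (ξ l))
      exact inner_self_eq_zero.1 h2
    have e5 : K ≤ LinearMap.ker A.toLinearMap := by
      refine Submodule.topologicalClosure_minimal _ ?_ A.isClosed_ker
      rw [Submodule.span_le]
      rintro _ ⟨l, rfl⟩
      exact e4 l
    ext1 v
    obtain ⟨y, hy, z, hz, rfl⟩ := K.exists_add_mem_mem_orthogonal v
    rw [map_add, hA2 z hz]
    have : A y = 0 := e5 hy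
    simp [this]
  · intro hA M₁ M₂ hM₁ hM₂ t ht0 ht1 hconv
    have key : ∀ B, MeasurableSet B → M₁.toFun B = M.toFun B := by
      choose c₁ hc₁ using covariant_form b μ U hU M₁ hM₁
      choose c₂ hc₂ using covariant_form b μ U hU M₂ hM₂
      have hsum : ∀ k l, ⟪ξ k, ξ l⟫ = (t : ℂ) * c₁ k l + ((1 - t : ℝ) : ℂ) * c₂ k l := by
        intro k l
        obtain ⟨B, hB, hne⟩ := exists_setIntegral_torusChar_ne μ ((k : Fin n → ℤ) - l)
        refine mul_right_cancel₀ hne ?_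
        rw [← hMform k l B hB, hconv B hB, ContinuousLinearMap.add_apply,
          ContinuousLinearMap.smul_apply, ContinuousLinearMap.smul_apply, inner_add_right,
          inner_smul_right, inner_smul_right, hc₁ k l B hB, hc₂ k l B hB]
        ring
      have hceq := kernel_eq ξ c₁ t⁻¹ (inv_nonneg.2 ht0.le) hξ (kernel_herm b μ M₁ c₁ hc₁)
        (kernel_pos b μ M₁ c₁ hc₁) (by
          intro a
          have p2 := kernel_pos b μ M₂ c₂ hc₂ a
          have hs : (a.sum fun k x => a.sum fun l y => (starRingEnd ℂ) x * y * ⟪ξ k, ξ l⟫) =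
              (t : ℂ) * (a.sum fun k x => a.sum fun l y => (starRingEnd ℂ) x * y * c₁ k l) +
              ((1 - t : ℝ) : ℂ) *
                (a.sum fun k x => a.sum fun l y => (starRingEnd ℂ) x * y * c₂ k l) := by
            simp only [Finsupp.sum, Finset.mul_sum, ← Finset.sum_add_distrib, hsum]
            refine Finset.sum_congr rfl fun k _ => Finset.sum_congr rfl fun l _ => ?_
            ring
          rw [hs, Complex.add_re, Complex.re_ofReal_mul, Complex.re_ofReal_mul, mul_add,
            inv_mul_cancel_left₀ ht0.ne']
          have : 0 ≤ 1 - t := by linarith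
          have := mul_nonneg (inv_nonneg.2 ht0.le) (mul_nonneg this p2)
          linarith) (kernel_diag b μ M₁ c₁ hc₁) hA
      intro B hB
      refine basis_ext_op b _ _ fun k l => ?_
      rw [hc₁ k l B hB, hMform k l B hB, hceq]
    intro B hB
    have h1 := key B hB
    refine ⟨h1, ?_⟩
    have h2 := hconv B hB
    rw [h1] at h2
    have hne : ((1 - t : ℝ) : ℂ) ≠ 0 := by
      have : (1 - t : ℝ) ≠ 0 := by linarith
      exact_mod_cast this
    have h3 : ((1 - t : ℝ) : ℂ) • M₂.toFun B = ((1 - t : ℝ) : ℂ) • M.toFun B := by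
      rw [← sub_eq_iff_eq_add'.2 h2]
      push_cast
      rw [sub_smul, one_smul]
    exact smul_right_injective _ hne h3
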